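/- Every tight finite two-person game form is Nash-solvable: if g : X × Y → Ω is tight, then for all payoff functions u, w : Ω → ℝ the game (g; u, w) has a Nash equilibrium in pure strategies. -/

import Mathlib

/-- A Nash equilibrium of the game `(g; u, w)`. -/
def IsNashEq {X Y Ω : Type*} (g : X × Y → Ω) (u w : Ω → ℝ) (x : X) (y : Y) : Prop :=
  (∀ x' : X, u (g (x', y)) ≤ u (g (x, y))) ∧ (∀ y' : Y, w (g (x, y')) ≤ w (g (x, y)))

/-- `g` is tight: the images of the graphs of any two response strategies intersect. -/
def TightGF {X Y Ω : Type*} (g : X × Y → Ω) : Prop :=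
  ∀ (φ : X → Y) (ψ : Y → X), ∃ x y, g (x, φ x) = g (ψ y, y)

/-- Every tight finite two-person game form is Nash-solvable:
for all payoff functions `u, w : Ω → ℝ`, the game `(g; u, w)` has a Nash
equilibrium in pure strategies. -/
theorem tight_implies_nashSolvable
    {X Y Ω : Type*} [Fintype X] [Fintype Y] [Fintype Ω]
    [Nonempty X] [Nonempty Y]
    (g : X × Y → Ω) (hsurj : Function.Surjective g)
    (ht : TightGF g)
    (u w : Ω → ℝ) :
    ∃ x y, IsNashEq g u w x y := by
  classical
  let N : ℕ := Fintype.card Ω + 1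
  let c : Ω → ℕ := fun o => (Finset.univ.filter (fun o' => u o < u o')).card
  let W : Ω → ℕ := fun o => N ^ c o
  let S : X → Finset Ω := fun x => Finset.univ.image (fun y => g (x, y))
  -- the weight of an outcome exceeds the total weight of strictly better outcomes
  have hW : ∀ a : Ω, ∑ o ∈ Finset.univ.filter (fun o => u a < u o), W o < W a := by
    intro a
    have hc : ∀ o, u a < u o → c o < c a := by
      intro o ho
      apply Finset.card_lt_card
      refine (Finset.ssubset_iff_of_subset ?_).2 ⟨o, by simpa using ho, by simp⟩
      intro z hz
      simp only [Finset.mem_filter, Finset.mem_univ, true_and] at hz ⊢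
      exact ho.trans hz
    have h1 : N * ∑ o ∈ Finset.univ.filter (fun o => u a < u o), W o
        ≤ Fintype.card Ω * W a := by
      rw [Finset.mul_sum]
      calc _ ≤ ∑ o ∈ Finset.univ.filter (fun o => u a < u o), W a := by
            apply Finset.sum_le_sum
            intro o ho
            have := hc o (by simpa using ho)
            show N * N ^ c o ≤ N ^ c a
            rw [← pow_succ']
            exact Nat.pow_le_pow_right (Nat.succ_pos _) this
        _ ≤ _ := by
            rw [Finset.sum_const, smul_eq_mul]
            exact Nat.mul_le_mul_right _ (Finset.card_le_univ _)
    have hpos : 0 < W a := Nat.pow_pos (Nat.succ_pos _)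
    by_contra hcon
    have h2 := Nat.mul_le_mul_left N (not_lt.1 hcon)
    have h3 : N * W a = Fintype.card Ω * W a + W a := Nat.succ_mul _ _
    omega
  obtain ⟨x, hx⟩ := Finite.exists_min (fun x => ∑ o ∈ S x, W o)
  obtain ⟨y₀, hy₀⟩ := Finite.exists_max (fun y => w (g (x, y)))
  obtain ⟨a, ha⟩ : ∃ a, a = g (x, y₀) := ⟨_, rfl⟩
  have haS : a ∈ S x := by simp [S, ha]
  have key : ∃ y, ∀ x', g (x', y) = a ∨ (u (g (x', y)) ≤ u a ∧ g (x', y) ∉ S x) := by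
    by_contra hcon
    push Not at hcon
    choose ψ hψ using hcon
    have hrow : ∀ x', ∃ y, g (x', y) = a ∨ (u (g (x', y)) ≤ u a ∧ g (x', y) ∉ S x) := by
      intro x'
      by_contra hcon
      push Not at hcon
      have hsub : S x' ⊆ (S x).erase a ∪ Finset.univ.filter (fun o => u a < u o) := by
        intro o ho
        obtain ⟨y, -, rfl⟩ := Finset.mem_image.1 ho
        obtain ⟨h1, h2⟩ := hcon y
        simp only [Finset.mem_union, Finset.mem_erase, Finset.mem_filter, Finset.mem_univ,
          true_and]
        by_cases h : u (g (x', y)) ≤ u a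
        · exact Or.inl ⟨h1, h2 h⟩
        · exact Or.inr (not_le.1 h)
      have e1 := Finset.sum_le_sum_of_subset (f := W) hsub
      have e2 := Finset.sum_union_inter (f := W) (s₁ := (S x).erase a)
        (s₂ := Finset.univ.filter (fun o => u a < u o))
      have e3 := Finset.sum_erase_add (S x) W haS
      have e4 := hW a
      have e5 : ∑ o ∈ S x, W o ≤ ∑ o ∈ S x', W o := hx x'
      omega
    choose φ hφ using hrow
    obtain ⟨x', y, h⟩ := ht φ ψ
    have h1 := hφ x'
    have h2 := hψ y
    rw [h] at h1
    rcases h1 with h1 | h1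
    · exact h2.1 h1
    · exact h1.2 (h2.2 h1.1)
  obtain ⟨y, hy⟩ := key
  have hxy : g (x, y) = a := by
    rcases hy x with h | h
    · exact h
    · exact absurd (Finset.mem_image_of_mem (fun y => g (x, y)) (Finset.mem_univ y)) h.2
  refine ⟨x, y, fun x' => ?_, fun y' => ?_⟩
  · rw [hxy]
    rcases hy x' with h | h
    · rw [h]
    · exact h.1
  · rw [hxy, ha]
    exact hy₀ y'
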